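/- Suppose B divides K and let the uniform batch grid be t_b = (b−1)(K/B) + 1 for b ∈ [B+1]; for each k ∈ [K], let b_k = t_b where b is the unique index with t_b ≤ k < t_{b+1}. Then for any β > 0, Σ_{k=1}^K Σ_{h=1}^H min{H, 2β √(φ_h^{kᵀ} (Λ_h^{b_k})^{−1} φ_h^k)} ≤ (d H T)/(2 B log 2) · log(T/(dH) + 1) + 4β √(2 d H T log(T/(dH) + 1)), where T = KH. -/

import Mathlib

open Matrix

lemma aux_symm {d : ℕ} {A : Matrix (Fin d) (Fin d) ℝ} (hA : A.PosDef) (y z : Fin d → ℝ) :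
    y ⬝ᵥ A *ᵥ z = z ⬝ᵥ A *ᵥ y := by
  have h : Aᵀ = A := by
    have := hA.1
    rwa [Matrix.IsHermitian, Matrix.conjTranspose_eq_transpose_of_trivial] at this
  rw [dotProduct_comm, ← Matrix.vecMul_transpose, h, ← Matrix.dotProduct_mulVec]

lemma aux_nonneg {d : ℕ} {A : Matrix (Fin d) (Fin d) ℝ} (hA : A.PosDef) (y : Fin d → ℝ) :
    0 ≤ y ⬝ᵥ A *ᵥ y := by
  have := hA.posSemidef.dotProduct_mulVec_nonneg y
  simpa using this

lemma aux_cs {d : ℕ} {A : Matrix (Fin d) (Fin d) ℝ} (hA : A.PosDef) (y z : Fin d → ℝ) :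
    (z ⬝ᵥ A *ᵥ y) ^ 2 ≤ (z ⬝ᵥ A *ᵥ z) * (y ⬝ᵥ A *ᵥ y) := by
  have h := discrim_le_zero (a := y ⬝ᵥ A *ᵥ y) (b := 2 * (z ⬝ᵥ A *ᵥ y)) (c := z ⬝ᵥ A *ᵥ z)
    (fun c => by
      have h1 := aux_nonneg hA (c • y + z)
      have h2 := aux_symm hA y z
      simp only [Matrix.mulVec_add, Matrix.mulVec_smul, dotProduct_add, add_dotProduct,
        smul_dotProduct, dotProduct_smul, smul_eq_mul] at h1
      rw [h2] at h1
      nlinarith)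
  unfold discrim at h
  nlinarith

lemma aux_det {d : ℕ} {A : Matrix (Fin d) (Fin d) ℝ} (hA : A.PosDef) (v : Fin d → ℝ) :
    (A + vecMulVec v v).det = A.det * (1 + v ⬝ᵥ A⁻¹ *ᵥ v) := by
  have hu : IsUnit A.det := hA.det_pos.ne'.isUnit
  have h := det_add_replicateCol_mul_replicateRow (ι := Unit) hu v v
  rw [← vecMulVec_eq] at h
  rw [h]
  congr 1
  rw [Matrix.det_unique]
  simp only [Matrix.add_apply, Matrix.one_apply_eq]
  congr 1
  rw [Matrix.mul_assoc, ← Matrix.replicateCol_mulVec]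
  rfl

lemma aux_posDef {d : ℕ} {A : Matrix (Fin d) (Fin d) ℝ} (hA : A.PosDef) (v : Fin d → ℝ) :
    (A + vecMulVec v v).PosDef := by
  have h := posSemidef_vecMulVec_self_star (R := ℝ) v
  rw [star_trivial] at h
  exact hA.add_posSemidef h

lemma aux_step {d : ℕ} {A : Matrix (Fin d) (Fin d) ℝ} (hA : A.PosDef) (v x : Fin d → ℝ) :
    x ⬝ᵥ (A + vecMulVec v v)⁻¹ *ᵥ x ≤ x ⬝ᵥ A⁻¹ *ᵥ x ∧
    x ⬝ᵥ A⁻¹ *ᵥ x ≤ (1 + v ⬝ᵥ A⁻¹ *ᵥ v) * (x ⬝ᵥ (A + vecMulVec v v)⁻¹ *ᵥ x) := by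
  have hB := aux_posDef hA v
  have huA : IsUnit A.det := hA.det_pos.ne'.isUnit
  have huB : IsUnit (A + vecMulVec v v).det := hB.det_pos.ne'.isUnit
  obtain ⟨y, hy⟩ : ∃ y, y = (A + vecMulVec v v)⁻¹ *ᵥ x := ⟨_, rfl⟩
  obtain ⟨z, hz⟩ : ∃ z, z = A⁻¹ *ᵥ v := ⟨_, rfl⟩
  have hAz : A *ᵥ z = v := by
    rw [hz, Matrix.mulVec_mulVec, Matrix.mul_nonsing_inv _ huA, Matrix.one_mulVec]
  have hx : x = A *ᵥ y + (v ⬝ᵥ y) • v := by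
    have : (A + vecMulVec v v) *ᵥ y = x := by
      rw [hy, Matrix.mulVec_mulVec, Matrix.mul_nonsing_inv _ huB, Matrix.one_mulVec]
    rw [← this, Matrix.add_mulVec, vecMulVec_mulVec]
    simp
  have hAx : A⁻¹ *ᵥ x = y + (v ⬝ᵥ y) • z := by
    rw [hx, Matrix.mulVec_add, Matrix.mulVec_smul, Matrix.mulVec_mulVec,
      Matrix.nonsing_inv_mul _ huA, Matrix.one_mulVec, hz]
  have hw : v ⬝ᵥ y = z ⬝ᵥ A *ᵥ y := by
    rw [← hAz, dotProduct_comm, aux_symm hA]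
  have hs : v ⬝ᵥ z = z ⬝ᵥ A *ᵥ z := by
    rw [dotProduct_comm]; rw [hAz]
  have hcs := aux_cs hA y z
  have e1 : x ⬝ᵥ y = y ⬝ᵥ A *ᵥ y + (v ⬝ᵥ y) ^ 2 := by
    conv_lhs => rw [hx]
    rw [add_dotProduct, smul_dotProduct, dotProduct_comm (A *ᵥ y) y, smul_eq_mul]
    ring
  have e2 : x ⬝ᵥ z = v ⬝ᵥ y + (v ⬝ᵥ y) * (v ⬝ᵥ z) := by
    conv_lhs => rw [hx]
    rw [add_dotProduct, smul_dotProduct, dotProduct_comm (A *ᵥ y) z, smul_eq_mul, hw]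
  rw [hAx, ← hy, ← hz, dotProduct_add, dotProduct_smul, smul_eq_mul, e2, e1]
  rw [← hw, ← hs] at hcs
  have hs0 : 0 ≤ v ⬝ᵥ z := by rw [hs]; exact aux_nonneg hA z
  constructor
  · nlinarith [sq_nonneg (v ⬝ᵥ y), mul_nonneg (sq_nonneg (v ⬝ᵥ y)) hs0]
  · nlinarith

lemma aux_logdet {d : ℕ} {A : Matrix (Fin d) (Fin d) ℝ} (hA : A.PosDef) (c : ℝ) (hc : 0 < c)
    (htr : A.trace ≤ d * c) : Real.log A.det ≤ d * Real.log c := by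
  have h1 := hA.1.det_eq_prod_eigenvalues
  have h2 := hA.1.trace_eq_sum_eigenvalues
  simp only [RCLike.ofReal_real_eq_id, id] at h1 h2
  have hpos := hA.eigenvalues_pos
  rw [h1, Real.log_prod (fun i _ => (hpos i).ne')]
  have h3 : ∀ i ∈ Finset.univ, Real.log (hA.1.eigenvalues i)
      ≤ hA.1.eigenvalues i / c - 1 + Real.log c := by
    intro i _
    have := Real.log_le_sub_one_of_pos (div_pos (hpos i) hc)
    rw [Real.log_div (hpos i).ne' hc.ne'] at this
    linarith
  refine (Finset.sum_le_sum h3).trans ?_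
  rw [Finset.sum_add_distrib, Finset.sum_sub_distrib, ← Finset.sum_div, ← h2]
  simp only [Finset.sum_const, Finset.card_univ, Fintype.card_fin, nsmul_eq_mul, mul_one]
  have : A.trace / c ≤ d := by rw [div_le_iff₀ hc]; exact htr
  linarith

lemma aux_block (f : ℕ → ℝ) (m B : ℕ) (hm : 0 < m) :
    ∑ n ∈ Finset.range (B * m), f (n / m) = m * ∑ j ∈ Finset.range B, f j := by
  induction B with
  | zero => simp
  | succ B ih =>
    rw [Nat.succ_mul, Finset.sum_range_add, ih, Finset.sum_range_succ, mul_add]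
    congr 1
    rw [Finset.sum_congr rfl (g := fun _ => f B)]
    · simp
    · intro x hx
      rw [Finset.mem_range] at hx
      congr 1
      rw [mul_comm, Nat.mul_add_div hm, Nat.div_eq_of_lt hx, add_zero]

lemma aux_two_log {x : ℝ} (h0 : 0 ≤ x) (h1 : x ≤ 1) : x ≤ 2 * Real.log (1 + x) := by
  have h := Real.one_sub_inv_le_log_of_pos (show 0 < 1 + x by linarith)
  have h2 : x / 2 ≤ 1 - (1 + x)⁻¹ := by
    have : 1 - (1 + x)⁻¹ = x / (1 + x) := by field_simp; ring
    rw [this]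
    exact div_le_div_of_nonneg_left h0 (by linarith) (by linarith)
  linarith

/-- Everything about one step index `h`. -/
lemma aux_seq {d K m B : ℕ} (hd : 1 ≤ d) (hm : 0 < m) (hK : K = B * m)
    (v : ℕ → Fin d → ℝ) (hv : ∀ n < K, v n ⬝ᵥ v n ≤ 1)
    (G : ℕ → Matrix (Fin d) (Fin d) ℝ) (hG0 : G 0 = 1)
    (hG : ∀ n, G (n + 1) = G n + vecMulVec (v n) (v n)) :
    ∃ a : ℕ → ℝ, (∀ j, a j = 0 ∨ a j = 1) ∧
      (∑ n ∈ Finset.range K, a (n / m)) * (2 * Real.log 2)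
        ≤ m * (d * Real.log ((K : ℝ) / d + 1)) ∧
      (∀ n, 0 ≤ v n ⬝ᵥ (G n)⁻¹ *ᵥ v n) ∧
      (∑ n ∈ Finset.range K, v n ⬝ᵥ (G n)⁻¹ *ᵥ v n) ≤ 2 * (d * Real.log ((K : ℝ) / d + 1)) ∧
      (∀ n, a (n / m) = 0 → v n ⬝ᵥ (G (n / m * m))⁻¹ *ᵥ v n ≤ 4 * (v n ⬝ᵥ (G n)⁻¹ *ᵥ v n)) := by
  have hpd : ∀ n, (G n).PosDef := by
    intro n
    induction n with
    | zero => rw [hG0]; exact Matrix.PosDef.one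
    | succ n ih => rw [hG]; exact aux_posDef ih _
  have hq : ∀ n x, 0 ≤ x ⬝ᵥ (G n)⁻¹ *ᵥ x := fun n x => aux_nonneg (hpd n).inv x
  have hle : ∀ n x, x ⬝ᵥ (G n)⁻¹ *ᵥ x ≤ x ⬝ᵥ x := by
    intro n x
    induction n with
    | zero => rw [hG0]; simp
    | succ n ih => rw [hG]; exact (aux_step (hpd n) _ _).1.trans ih
  have hdet : ∀ n, (G (n + 1)).det = (G n).det * (1 + v n ⬝ᵥ (G n)⁻¹ *ᵥ v n) := by
    intro n; rw [hG]; exact aux_det (hpd n) _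
  have hmono : ∀ x, Monotone (fun n => (G n).det * (x ⬝ᵥ (G n)⁻¹ *ᵥ x)) := by
    intro x
    refine monotone_nat_of_le_succ (fun n => ?_)
    have h := (aux_step (hpd n) (v n) x).2
    rw [← hG] at h
    simp only [hdet, mul_assoc]
    exact mul_le_mul_of_nonneg_left h (hpd n).det_pos.le
  have hdmono : Monotone (fun n => (G n).det) := by
    refine monotone_nat_of_le_succ (fun n => ?_)
    rw [hdet]
    nlinarith [(hpd n).det_pos, hq n (v n), mul_nonneg (hpd n).det_pos.le (hq n (v n))]
  have hlogs : ∀ n, ∑ i ∈ Finset.range n, Real.log (1 + v i ⬝ᵥ (G i)⁻¹ *ᵥ v i)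
      = Real.log (G n).det := by
    intro n
    induction n with
    | zero => simp [hG0]
    | succ n ih =>
      rw [Finset.sum_range_succ, ih, hdet, Real.log_mul (hpd n).det_pos.ne']
      have := hq n (v n)
      positivity
  have htr : ∀ n ≤ K, (G n).trace ≤ d + n := by
    intro n
    induction n with
    | zero => intro _; simp [hG0]
    | succ n ih =>
      intro hn
      rw [hG, Matrix.trace_add, Matrix.trace_vecMulVec]
      have := ih (by omega)
      have := hv n (by omega)
      push_cast; linarith
  have hd0 : (0 : ℝ) < d := by exact_mod_cast hd
  have hfin : Real.log (G K).det ≤ d * Real.log ((K : ℝ) / d + 1) := by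
    refine aux_logdet (hpd K) _ (by positivity) ((htr K le_rfl).trans (le_of_eq ?_))
    field_simp
    try ring
  classical
  refine ⟨fun j => if 4 * (G (j * m)).det < (G ((j + 1) * m)).det then 1 else 0,
    ?_, ?_, fun n => hq n _, ?_, ?_⟩
  · intro j; by_cases h : 4 * (G (j * m)).det < (G ((j + 1) * m)).det <;> simp [h]
  · have hb : ∀ j ∈ Finset.range B,
        (if 4 * (G (j * m)).det < (G ((j + 1) * m)).det then (1 : ℝ) else 0) * (2 * Real.log 2)
        ≤ Real.log (G ((j + 1) * m)).det - Real.log (G (j * m)).det := by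
      intro j _
      have p1 := (hpd (j * m)).det_pos
      split_ifs with h
      · have h1 := Real.log_le_log (by positivity) h.le
        rw [Real.log_mul (by norm_num) p1.ne', show (4 : ℝ) = 2 ^ 2 by norm_num, Real.log_pow] at h1
        push_cast at h1
        linarith
      · have := Real.log_le_log p1 (hdmono (show j * m ≤ (j + 1) * m by gcongr; omega))
        linarith
    have hs := Finset.sum_le_sum hb
    rw [← Finset.sum_mul, Finset.sum_range_sub (fun j => Real.log (G (j * m)).det), ← hK] at hs
    simp only [zero_mul, hG0, Matrix.det_one, Real.log_one, sub_zero] at hs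
    rw [hK, aux_block (fun j => if 4 * (G (j * m)).det < (G ((j + 1) * m)).det then (1 : ℝ) else 0)
      m B hm, ← hK, mul_assoc]
    exact mul_le_mul_of_nonneg_left (hs.trans hfin) (by positivity)
  · have h1 : ∀ n ∈ Finset.range K, v n ⬝ᵥ (G n)⁻¹ *ᵥ v n
        ≤ 2 * Real.log (1 + v n ⬝ᵥ (G n)⁻¹ *ᵥ v n) := fun n hn =>
      aux_two_log (hq n _) ((hle n _).trans (hv n (Finset.mem_range.1 hn)))
    refine (Finset.sum_le_sum h1).trans ?_
    rw [← Finset.mul_sum, hlogs]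
    linarith
  · intro n hn
    have hn' : (G ((n / m + 1) * m)).det ≤ 4 * (G (n / m * m)).det := by
      by_contra hcon
      rw [not_le] at hcon
      simp [hcon] at hn
    have h1 := hmono (v n) (Nat.div_mul_le_self n m)
    have h2 := hdmono (show n ≤ (n / m + 1) * m from by
      have e1 := Nat.div_add_mod n m
      have e2 := Nat.mod_lt n hm
      have e3 : (n / m + 1) * m = m * (n / m) + m := by ring
      omega)
    simp only at h1 h2
    have h3 := mul_le_mul_of_nonneg_right (h2.trans hn') (hq n (v n))
    refine le_of_mul_le_mul_left ?_ (hpd (n / m * m)).det_pos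
    linarith

/-- With `B ∣ K`, the uniform batch grid `t_b = (b-1)(K/B) + 1`,
`b_k = t_b` for the unique `b` with `t_b ≤ k < t_{b+1}`, and `T = KH`, for any
`β > 0`,
`∑_{k=1}^K ∑_{h=1}^H min{H, 2β √(φ_h^kᵀ (Λ_h^{b_k})⁻¹ φ_h^k)}
  ≤ (dHT)/(2B log 2) · log(T/(dH)+1) + 4β √(2 d H T log(T/(dH)+1))`. -/
theorem stmt_11 (d H K B : ℕ) (hd : 1 ≤ d) (hH : 1 ≤ H) (hK : 1 ≤ K)
    (hB : 1 ≤ B) (hdvd : B ∣ K)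
    (φ : ℕ → ℕ → Fin d → ℝ)
    (hφ : ∀ h ∈ Finset.Icc 1 H, ∀ k ∈ Finset.Icc 1 K,
      Real.sqrt (φ h k ⬝ᵥ φ h k) ≤ 1)
    (Λ : ℕ → ℕ → Matrix (Fin d) (Fin d) ℝ)
    (hΛ : ∀ h k, Λ h k = (1 : Matrix (Fin d) (Fin d) ℝ) +
      ∑ τ ∈ Finset.Icc 1 (k - 1), Matrix.vecMulVec (φ h τ) (φ h τ))
    (t : ℕ → ℕ) (ht : ∀ b, t b = (b - 1) * (K / B) + 1)
    (bk : ℕ → ℕ)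
    (hbk : ∀ k ∈ Finset.Icc 1 K, ∃ b ∈ Finset.Icc 1 B,
      bk k = t b ∧ t b ≤ k ∧ k < t (b + 1))
    (T : ℕ) (hT : T = K * H)
    (β : ℝ) (hβ : 0 < β) :
    ∑ k ∈ Finset.Icc 1 K, ∑ h ∈ Finset.Icc 1 H,
        min (H : ℝ)
          (2 * β * Real.sqrt (φ h k ⬝ᵥ (Λ h (bk k))⁻¹.mulVec (φ h k)))
      ≤ (d * H * T) / (2 * B * Real.log 2) * Real.log ((T : ℝ) / (d * H) + 1)
        + 4 * β * Real.sqrt (2 * d * H * T * Real.log ((T : ℝ) / (d * H) + 1)) := by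
  have hm : 0 < K / B := Nat.div_pos (Nat.le_of_dvd hK hdvd) hB
  have hKm : K = B * (K / B) := (Nat.mul_div_cancel' hdvd).symm
  obtain ⟨m, hmdef⟩ : ∃ m, m = K / B := ⟨_, rfl⟩
  rw [← hmdef] at hm hKm
  have hd0 : (0 : ℝ) < d := by exact_mod_cast hd
  have hH0 : (0 : ℝ) < H := by exact_mod_cast hH
  have hB0 : (0 : ℝ) < B := by exact_mod_cast hB
  have hL : (T : ℝ) / (d * H) + 1 = (K : ℝ) / d + 1 := by
    rw [hT]; push_cast; field_simp
  have hbk' : ∀ n < K, bk (n + 1) = n / m * m + 1 := by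
    intro n hn
    obtain ⟨b, hb, e, h1, h2⟩ := hbk (n + 1) (Finset.mem_Icc.2 ⟨by omega, by omega⟩)
    rw [ht, ← hmdef] at h1 h2
    rw [e, ht, ← hmdef]
    obtain ⟨c, rfl⟩ : ∃ c, b = c + 1 := ⟨b - 1, by have := (Finset.mem_Icc.1 hb).1; omega⟩
    simp only [Nat.add_sub_cancel] at h1 h2 ⊢
    have : n / m = c := by
      apply Nat.div_eq_of_lt_le <;> omega
    rw [this]
  have key := fun h (hh : h ∈ Finset.Icc 1 H) => aux_seq hd hm hKm (fun n => φ h (n + 1))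
    (fun n hn => by
      have := hφ h hh (n + 1) (Finset.mem_Icc.2 ⟨by omega, by omega⟩)
      rwa [Real.sqrt_le_one] at this)
    (fun n => Λ h (n + 1)) (by rw [hΛ]; simp) (fun n => by
      simp only [hΛ, Nat.add_sub_cancel]
      rw [Finset.sum_Icc_succ_top (by omega), add_assoc])
  have hlog2 : 0 < Real.log 2 := Real.log_pos (by norm_num)
  rw [hL]
  obtain ⟨L, hLdef⟩ : ∃ L, L = Real.log ((K : ℝ) / d + 1) := ⟨_, rfl⟩
  simp only [← hLdef] at key ⊢
  have hreindex : ∀ f : ℕ → ℝ, ∑ k ∈ Finset.Icc 1 K, f k = ∑ n ∈ Finset.range K, f (n + 1) := by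
    intro f
    rw [Finset.range_eq_Ico, Finset.sum_Ico_add' f 0 K 1]
    rfl
  rw [Finset.sum_comm]
  -- the potential at the current index
  let q : ℕ → ℕ → ℝ := fun h n => φ h (n + 1) ⬝ᵥ (Λ h (n + 1))⁻¹ *ᵥ φ h (n + 1)
  have per : ∀ h ∈ Finset.Icc 1 H, ∑ k ∈ Finset.Icc 1 K, min (H : ℝ)
      (2 * β * Real.sqrt (φ h k ⬝ᵥ (Λ h (bk k))⁻¹.mulVec (φ h k)))
      ≤ H * (m * (d * L) / (2 * Real.log 2)) + 4 * β * ∑ n ∈ Finset.range K, Real.sqrt (q h n) := by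
    intro h hh
    obtain ⟨a, ha, hsum, hq0, -, hgood⟩ := key h hh
    rw [← le_div_iff₀ (by positivity)] at hsum
    rw [hreindex]
    have hterm : ∀ n ∈ Finset.range K, min (H : ℝ)
        (2 * β * Real.sqrt (φ h (n + 1) ⬝ᵥ (Λ h (bk (n + 1)))⁻¹.mulVec (φ h (n + 1))))
        ≤ H * a (n / m) + 4 * β * Real.sqrt (q h n) := by
      intro n hn
      rw [hbk' n (Finset.mem_range.1 hn)]
      have hsq := Real.sqrt_nonneg (q h n)
      rcases ha (n / m) with h0 | h1
      · have hg := Real.sqrt_le_sqrt (hgood n h0)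
        rw [Real.sqrt_mul (by norm_num), show (4 : ℝ) = 2 ^ 2 by norm_num,
          Real.sqrt_sq (by norm_num)] at hg
        refine (min_le_right _ _).trans ?_
        rw [h0, mul_zero, zero_add]
        calc _ ≤ 2 * β * (2 * Real.sqrt (q h n)) :=
              mul_le_mul_of_nonneg_left hg (by positivity)
          _ = _ := by ring
      · refine (min_le_left _ _).trans ?_
        rw [h1]
        have : 0 ≤ 4 * β * Real.sqrt (q h n) := by positivity
        linarith
    refine (Finset.sum_le_sum hterm).trans ?_
    rw [Finset.sum_add_distrib, ← Finset.mul_sum, ← Finset.mul_sum]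
    have := mul_le_mul_of_nonneg_left hsum hH0.le
    linarith
  refine (Finset.sum_le_sum per).trans ?_
  rw [Finset.sum_add_distrib]
  have hc1 : ∑ _h ∈ Finset.Icc 1 H, (H : ℝ) * (m * (d * L) / (2 * Real.log 2))
      = (d * H * T) / (2 * B * Real.log 2) * L := by
    have : (K : ℝ) = B * m := by exact_mod_cast hKm
    rw [hT]; push_cast
    rw [this]
    simp only [Finset.sum_const, Nat.card_Icc, Nat.add_sub_cancel, nsmul_eq_mul]
    field_simp
  rw [hc1, ← Finset.mul_sum]
  gcongr
  rw [← Finset.sum_product']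
  apply Real.le_sqrt_of_sq_le
  refine (sq_sum_le_card_mul_sum_sq).trans ?_
  have hs : ∑ p ∈ Finset.Icc 1 H ×ˢ Finset.range K, Real.sqrt (q p.1 p.2) ^ 2
      ≤ H * (2 * (d * L)) := by
    rw [Finset.sum_product]
    have : ∀ h ∈ Finset.Icc 1 H, ∑ n ∈ Finset.range K, Real.sqrt (q h n) ^ 2 ≤ 2 * (d * L) := by
      intro h hh
      obtain ⟨a, ha, hsum, hq0, hs, hgood⟩ := key h hh
      refine le_trans (le_of_eq ?_) hs
      exact Finset.sum_congr rfl (fun n _ => Real.sq_sqrt (hq0 n))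
    refine (Finset.sum_le_sum this).trans ?_
    simp
  have hcard : ((Finset.Icc 1 H ×ˢ Finset.range K).card : ℝ) = T := by
    rw [Finset.card_product, hT]; simp [mul_comm]
  rw [hcard]
  refine (mul_le_mul_of_nonneg_left hs (by positivity)).trans (le_of_eq ?_)
  ring
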